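/- Let K be a field of characteristic p > 0. The map γ_0 : Ω^r_{K(z)/K} → H^r_{K(z)} = Z^r/B^r sending a_I(z) dz_I to the class of a_I(z^p)·z_I^{p−1} dz_I is a bijection (an isomorphism of K(z)-vector spaces, where K(z) acts on H^r via a(z) ↦ a(z^p)). -/

import Mathlib

open MvPolynomial

/-- An `r`-form in `n` variables with coefficients in `R`, written in the standard basis of the
`dz_I` indexed by the `r`-element subsets `I` of the set of variables. -/
abbrev GForm (R : Type) (n r : ℕ) := {s : Finset (Fin n) // s.card = r} → R

/-- The exterior derivative of an `r`-form, relative to a family `D` of partial derivatives: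
`(dω)_T = ∑_{j ∈ T} (-1)^{pos of j in T} D_j ω_{T∖{j}}`. -/
noncomputable def gextd {R : Type} [CommRing R] {n r : ℕ} (D : Fin n → R → R)
    (ω : GForm R n r) : GForm R n (r + 1) :=
  fun T => ∑ j ∈ T.1.attach,
    (-1 : R) ^ ((T.1.filter (fun k => k < j.1)).card) *
      D j.1 (ω ⟨T.1.erase j.1, by rw [Finset.card_erase_of_mem j.2, T.2]; rfl⟩)

/-- The iterated operator `∂_{i_1}^{p-1} ⋯ ∂_{i_r}^{p-1}` for `T = {i_1 < … < i_r}`. -/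
def gpdSet {R : Type} {n : ℕ} (D : Fin n → R → R) (p : ℕ) (T : Finset (Fin n)) (f : R) : R :=
  (T.sort (· ≤ ·)).foldr (fun i g => (D i)^[p - 1] g) f

/-- The family of formal partial derivatives on `K[z_1,…,z_n]`. -/
noncomputable def pderivFam (K : Type) [CommRing K] (n : ℕ) :
    Fin n → MvPolynomial (Fin n) K → MvPolynomial (Fin n) K :=
  fun i f => pderiv i f

/-!
In the basis of logarithmic forms `dz_I / z_I`, the exterior derivative becomes the differential of
the Koszul complex of the operators `θ_j = z_j ∂_j`, which commute and satisfy `θ_j ^ p = θ_j`: both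
facts hold on monomials, and every rational function is a `p`-th power times a polynomial.
Contraction with the `i`-th direction makes `θ_i` null-homotopic (Cartan's formula), so
`1 - θ_i ^ (p - 1)` acts as the identity on cohomology. The product of these operators over all `i`
projects onto the common kernel of the `θ_i`, which is `K(z^p)`. On forms with coefficients in this
kernel the differential vanishes, so they represent each cohomology class exactly once. In
logarithmic coefficients `γ₀` is the substitution `a(z) ↦ a(z^p)`, an isomorphism of `K(z)` onto
`K(z^p)`.
-/

section Koszul

variable {n r : ℕ}

/-- The sign `(-1)^{#{k ∈ s : k < j}}` of `dz_j ∧ dz_{s ∖ {j}}` relative to `dz_s`. -/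
def positionSign (j : Fin n) (s : Finset (Fin n)) : ℤ :=
  (-1) ^ (s.filter (· < j)).card

lemma positionSign_mul_self (j : Fin n) (s : Finset (Fin n)) :
    positionSign j s * positionSign j s = 1 := by
  rw [positionSign, ← mul_pow, neg_one_mul, neg_neg, one_pow]

lemma positionSign_insert {i : Fin n} {s : Finset (Fin n)} (hi : i ∉ s) (j : Fin n) :
    positionSign j (insert i s) = (if i < j then -1 else 1) * positionSign j s := by
  unfold positionSign
  rw [Finset.filter_insert]
  split_ifs
  · rw [Finset.card_insert_of_notMem (by simp [hi]), pow_succ']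
  · rw [one_mul]

lemma positionSign_insert_self {i : Fin n} {s : Finset (Fin n)} (hi : i ∉ s) :
    positionSign i (insert i s) = positionSign i s := by
  rw [positionSign_insert hi, if_neg (lt_irrefl i), one_mul]

lemma positionSign_erase_self {i : Fin n} {s : Finset (Fin n)} (hi : i ∈ s) :
    positionSign i (s.erase i) = positionSign i s := by
  rw [← positionSign_insert_self (Finset.notMem_erase i s), Finset.insert_erase hi]

lemma positionSign_exchange {i j : Fin n} {s : Finset (Fin n)} (hi : i ∉ s) (hj : j ∈ s) :
    positionSign i s * positionSign j (insert i s) =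
      -(positionSign j s * positionSign i (s.erase j)) := by
  have hij : i ≠ j := fun h => hi (h ▸ hj)
  have hs := positionSign_insert (Finset.notMem_erase j s) i
  rw [Finset.insert_erase hj] at hs
  rw [positionSign_insert hi, hs]
  rcases lt_or_gt_of_ne hij with h | h
  · rw [if_pos h, if_neg h.not_gt]; ring
  · rw [if_neg h.not_gt, if_pos h]; ring

/-- The coefficients of a form, extended by zero to all finsets, so that the coefficient at an
`insert` or `erase` can be written without a proof about its cardinality. -/
def GForm.coeff {R : Type} [Zero R] (u : GForm R n r) (s : Finset (Fin n)) : R :=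
  if h : s.card = r then u ⟨s, h⟩ else 0

lemma card_erase_of_mem_subtype {T : {s : Finset (Fin n) // s.card = r + 1}} {j : Fin n}
    (hj : j ∈ T.1) : (T.1.erase j).card = r := by
  rw [Finset.card_erase_of_mem hj, T.2, Nat.add_sub_cancel]

lemma card_insert_of_notMem_subtype {S : {s : Finset (Fin n) // s.card = r}} {i : Fin n}
    (hi : i ∉ S.1) : (insert i S.1).card = r + 1 := by
  rw [Finset.card_insert_of_notMem hi, S.2]

lemma GForm.coeff_of_card_eq {R : Type} [Zero R] (u : GForm R n r) {s : Finset (Fin n)}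
    (h : s.card = r) : u.coeff s = u ⟨s, h⟩ :=
  dif_pos h

variable {R : Type} [CommRing R]

/-- Contraction of a form with the `i`-th basis vector field. -/
def contraction (i : Fin n) : GForm R n (r + 1) →+ GForm R n r where
  toFun u S := if i ∈ S.1 then 0 else positionSign i S.1 • u.coeff (insert i S.1)
  map_zero' := by
    ext S
    simp [GForm.coeff]
  map_add' u v := by
    ext S
    by_cases hi : i ∈ S.1
    · simp [hi]
    · simp [hi, GForm.coeff_of_card_eq _ (card_insert_of_notMem_subtype hi)]

lemma contraction_of_mem {i : Fin n} (u : GForm R n (r + 1))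
    {S : {s : Finset (Fin n) // s.card = r}} (hi : i ∈ S.1) : contraction i u S = 0 :=
  if_pos hi

lemma contraction_of_notMem {i : Fin n} (u : GForm R n (r + 1))
    {S : {s : Finset (Fin n) // s.card = r}} (hi : i ∉ S.1) :
    contraction i u S = positionSign i S.1 • u.coeff (insert i S.1) :=
  if_neg hi

/-- The differential `gextd` as an additive map, for a family `θ` of additive operators. When the
`θ j` commute, this is the differential of their Koszul complex. -/
noncomputable def koszulDifferential (θ : Fin n → AddMonoid.End R) :
    GForm R n r →+ GForm R n (r + 1) where
  toFun := gextd fun j => θ j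
  map_zero' := by
    ext T
    simp [gextd]
  map_add' u v := by
    ext T
    simp [gextd, mul_add, Finset.sum_add_distrib]

variable (θ : Fin n → AddMonoid.End R)

lemma koszulDifferential_apply (u : GForm R n r) (T : {s : Finset (Fin n) // s.card = r + 1}) :
    koszulDifferential θ u T =
      ∑ j ∈ T.1, positionSign j T.1 • θ j (u.coeff (T.1.erase j)) := by
  rw [← Finset.sum_attach]
  refine Finset.sum_congr rfl fun j _ => ?_
  rw [GForm.coeff_of_card_eq u (card_erase_of_mem_subtype j.2), positionSign, zsmul_eq_mul]
  push_cast
  rfl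

lemma koszulDifferential_eq_zero_of_forall {u : GForm R n r} (hu : ∀ j S, θ j (u S) = 0) :
    koszulDifferential θ u = 0 := by
  ext T
  simp [koszulDifferential, gextd, hu]

variable {θ} in
lemma koszulDifferential_comp {A : AddMonoid.End R} (hA : ∀ j, Commute A (θ j))
    (u : GForm R n r) : koszulDifferential θ (A ∘ u) = A ∘ koszulDifferential θ u := by
  ext T
  rw [Function.comp_apply, koszulDifferential_apply, koszulDifferential_apply, map_sum]
  refine Finset.sum_congr rfl fun j hj => ?_
  have hcard := card_erase_of_mem_subtype hj
  rw [map_zsmul, GForm.coeff_of_card_eq _ hcard, GForm.coeff_of_card_eq _ hcard]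
  exact congrArg _ (DFunLike.congr_fun (hA j) _).symm

lemma koszulDifferential_contraction_of_mem {i : Fin n} (u : GForm R n (r + 1))
    {T : {s : Finset (Fin n) // s.card = r + 1}} (hi : i ∈ T.1) :
    koszulDifferential θ (contraction i u) T = θ i (u T) := by
  rw [koszulDifferential_apply, Finset.sum_eq_single_of_mem i hi]
  · rw [GForm.coeff_of_card_eq _ (card_erase_of_mem_subtype hi),
      contraction_of_notMem u (Finset.notMem_erase i _), map_zsmul, smul_smul,
      positionSign_erase_self hi, positionSign_mul_self, one_smul, Finset.insert_erase hi,
      GForm.coeff_of_card_eq u T.2]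
  · intro j hj hji
    rw [GForm.coeff_of_card_eq _ (card_erase_of_mem_subtype hj),
      contraction_of_mem u (Finset.mem_erase.2 ⟨hji.symm, hi⟩), map_zero, smul_zero]

lemma koszulDifferential_contraction_add_of_notMem {i : Fin n} (u : GForm R n (r + 1))
    {T : {s : Finset (Fin n) // s.card = r + 1}} (hi : i ∉ T.1) :
    koszulDifferential θ (contraction i u) T + contraction i (koszulDifferential θ u) T =
      θ i (u T) := by
  rw [contraction_of_notMem _ hi,
    GForm.coeff_of_card_eq _ (card_insert_of_notMem_subtype hi), koszulDifferential_apply,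
    koszulDifferential_apply, Finset.sum_insert hi, Finset.erase_insert hi,
    positionSign_insert_self hi, smul_add, smul_smul, positionSign_mul_self, one_smul,
    GForm.coeff_of_card_eq u T.2, add_left_comm, Finset.smul_sum, ← Finset.sum_add_distrib,
    Finset.sum_eq_zero, add_zero]
  intro j hj
  have hij : i ≠ j := fun h => hi (h ▸ hj)
  rw [GForm.coeff_of_card_eq _ (card_erase_of_mem_subtype hj),
    contraction_of_notMem u fun h => hi (Finset.mem_of_mem_erase h), map_zsmul, smul_smul,
    smul_smul, positionSign_exchange hi hj, Finset.erase_insert_of_ne hij, neg_smul,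
    add_neg_cancel]

lemma koszulDifferential_contraction_add_contraction_koszulDifferential (i : Fin n)
    (u : GForm R n (r + 1)) :
    koszulDifferential θ (contraction i u) + contraction i (koszulDifferential θ u) =
      θ i ∘ u := by
  ext T
  by_cases hi : i ∈ T.1
  · rw [Pi.add_apply, koszulDifferential_contraction_of_mem θ u hi, contraction_of_mem _ hi,
      add_zero, Function.comp_apply]
  · exact koszulDifferential_contraction_add_of_notMem θ u hi

variable {θ}

lemma mul_comp_mem_range_koszulDifferential {A : AddMonoid.End R} (hA : ∀ j, Commute A (θ j))
    (i : Fin n) {u : GForm R n (r + 1)} (hu : koszulDifferential θ u = 0) :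
    (θ i * A) ∘ u ∈ (koszulDifferential θ (r := r)).range := by
  refine ⟨contraction i (A ∘ u), ?_⟩
  have hclosed : koszulDifferential θ (A ∘ u) = 0 := by
    rw [koszulDifferential_comp hA, hu]
    exact funext fun _ => map_zero A
  have h := koszulDifferential_contraction_add_contraction_koszulDifferential θ i (A ∘ u)
  rwa [hclosed, map_zero, add_zero] at h

variable (r θ) in
/-- The submonoid of the operators that commute with every `θ j` and act, coefficient by
coefficient, as the identity on the cohomology of the Koszul complex in degree `r + 1`. -/
def cohomologicallyTrivial : Submonoid (AddMonoid.End R) where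
  carrier := {A | (∀ j, Commute A (θ j)) ∧ ∀ u : GForm R n (r + 1), koszulDifferential θ u = 0 →
    A ∘ u - u ∈ (koszulDifferential θ (r := r)).range}
  one_mem' := ⟨fun j => Commute.one_left _, fun u _ => by
    rw [show (1 : AddMonoid.End R) ∘ u = u from rfl, sub_self]
    exact zero_mem _⟩
  mul_mem' := fun {A B} hA hB => ⟨fun j => (hA.1 j).mul_left (hB.1 j), fun u hu => by
    have hBu : koszulDifferential θ (B ∘ u) = 0 := by
      rw [koszulDifferential_comp hB.1, hu]
      exact funext fun _ => map_zero B
    rw [AddMonoid.End.coe_mul, Function.comp_assoc, ← sub_add_sub_cancel _ (B ∘ u)]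
    exact add_mem (hA.2 _ hBu) (hB.2 u hu)⟩

lemma one_sub_pow_mem_cohomologicallyTrivial (hcomm : ∀ i j, Commute (θ i) (θ j)) (m : ℕ)
    (i : Fin n) : 1 - θ i ^ (m + 1) ∈ cohomologicallyTrivial r θ := by
  refine ⟨fun j => (Commute.one_left _).sub_left ((hcomm i j).pow_left _), fun u hu => ?_⟩
  have h := neg_mem (mul_comp_mem_range_koszulDifferential (fun j => (hcomm i j).pow_left m) i hu)
  convert h using 1
  rw [← pow_succ']
  ext T
  change u T - (θ i ^ (m + 1)) (u T) - u T = -(θ i ^ (m + 1)) (u T)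
  rw [sub_sub_cancel_left]

lemma pairwise_commute_one_sub_pow (hcomm : ∀ i j, Commute (θ i) (θ j)) (m : ℕ) :
    ((Finset.univ : Finset (Fin n)) : Set (Fin n)).Pairwise
      (Function.onFun Commute fun i => 1 - θ i ^ (m + 1)) := fun i _ j _ _ =>
  (Commute.one_left _).sub_left ((Commute.one_right _).sub_right ((hcomm i j).pow_pow _ _))

/-- The product of the operators `1 - θ_i ^ (m + 1)`. When `θ_i ^ (m + 2) = θ_i` for all `i`, this
is the projection onto the common kernel of the `θ_i` along the sum of their images. -/
noncomputable def horizontalProjector (hcomm : ∀ i j, Commute (θ i) (θ j)) (m : ℕ) :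
    AddMonoid.End R :=
  Finset.univ.noncommProd (fun i => 1 - θ i ^ (m + 1)) (pairwise_commute_one_sub_pow hcomm m)

variable {m : ℕ}

lemma horizontalProjector_mem_cohomologicallyTrivial (hcomm : ∀ i j, Commute (θ i) (θ j)) :
    horizontalProjector hcomm m ∈ cohomologicallyTrivial r θ :=
  Submonoid.noncommProd_mem _ _ _ _ fun i _ => one_sub_pow_mem_cohomologicallyTrivial hcomm m i

lemma mul_horizontalProjector (hcomm : ∀ i j, Commute (θ i) (θ j))
    (hpow : ∀ i, θ i ^ (m + 2) = θ i) (i : Fin n) : θ i * horizontalProjector hcomm m = 0 := by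
  rw [horizontalProjector, ← Finset.mul_noncommProd_erase _ (Finset.mem_univ i), ← mul_assoc,
    mul_sub, mul_one, ← pow_succ', hpow, sub_self, zero_mul]

lemma horizontalProjector_apply_of_forall_eq_zero (hcomm : ∀ i j, Commute (θ i) (θ j))
    {f : R} (hf : ∀ i, θ i f = 0) : horizontalProjector hcomm m f = f := by
  refine Finset.noncommProd_induction _ _ _ (fun A : AddMonoid.End R => A f = f)
    (fun A B hA hB => ?_) rfl fun i _ => ?_
  · rw [AddMonoid.End.coe_mul, Function.comp_apply, hB, hA]
  · change f - (θ i ^ (m + 1)) f = f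
    rw [pow_succ, AddMonoid.End.coe_mul, Function.comp_apply, hf, map_zero, sub_zero]

lemma exists_horizontal_sub_mem_range (hcomm : ∀ i j, Commute (θ i) (θ j))
    (hpow : ∀ i, θ i ^ (m + 2) = θ i) {u : GForm R n (r + 1)} (hu : koszulDifferential θ u = 0) :
    ∃ v : GForm R n (r + 1), (∀ i T, θ i (v T) = 0) ∧
      v - u ∈ (koszulDifferential θ (r := r)).range :=
  ⟨horizontalProjector hcomm m ∘ u,
    fun i T => DFunLike.congr_fun (mul_horizontalProjector hcomm hpow i) (u T),
    (horizontalProjector_mem_cohomologicallyTrivial hcomm).2 u hu⟩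

lemma eq_zero_of_horizontal_of_mem_range (hcomm : ∀ i j, Commute (θ i) (θ j))
    (hpow : ∀ i, θ i ^ (m + 2) = θ i) {u : GForm R n (r + 1)} (hhor : ∀ i T, θ i (u T) = 0)
    (hexact : u ∈ (koszulDifferential θ (r := r)).range) : u = 0 := by
  obtain ⟨η, rfl⟩ := hexact
  have hcommute : ∀ j, Commute (horizontalProjector hcomm m) (θ j) :=
    (horizontalProjector_mem_cohomologicallyTrivial (r := r) hcomm).1
  calc koszulDifferential θ η
      = horizontalProjector hcomm m ∘ koszulDifferential θ η :=
        funext fun T => (horizontalProjector_apply_of_forall_eq_zero hcomm (hhor · T)).symm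
    _ = koszulDifferential θ (horizontalProjector hcomm m ∘ η) :=
        (koszulDifferential_comp hcommute η).symm
    _ = 0 := koszulDifferential_eq_zero_of_forall θ fun i S =>
        DFunLike.congr_fun (mul_horizontalProjector hcomm hpow i) (η S)

end Koszul

section LogDerivation

lemma derivation_pow_char {k A M : Type*} [CommSemiring k] [CommSemiring A] [Algebra k A]
    [AddCommMonoid M] [Module A M] [Module k M] (p : ℕ) [CharP A p] (D : Derivation k A M) (a : A) :
    D (a ^ p) = 0 := by
  rw [Derivation.leibniz_pow, ← Nat.cast_smul_eq_nsmul A, CharP.cast_eq_zero, zero_smul]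

variable {σ A : Type*} [CommRing A]

/-- The logarithmic derivation `x_j ∂_j`, as an additive operator. -/
def logDerivation (x : σ → A) (δ : σ → Derivation ℤ A A) (j : σ) : AddMonoid.End A :=
  (x j • δ j : Derivation ℤ A A).toLinearMap.toAddMonoidHom

lemma logDerivation_apply (x : σ → A) (δ : σ → Derivation ℤ A A) (j : σ) (a : A) :
    logDerivation x δ j a = x j * δ j a :=
  rfl

lemma commute_logDerivation_mulLeft_pow_char (x : σ → A) (δ : σ → Derivation ℤ A A) (p : ℕ)
    [CharP A p] (j : σ) (c : A) :
    Commute (logDerivation x δ j) (AddMonoid.End.mulLeft (c ^ p)) := by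
  refine DFunLike.ext _ _ fun a => ?_
  change x j * δ j (c ^ p * a) = c ^ p * (x j * δ j a)
  rw [Derivation.leibniz, derivation_pow_char, smul_zero, add_zero, smul_eq_mul, mul_left_comm]

end LogDerivation

section LogCoeffs

variable {A : Type} {n r : ℕ}

/-- Passage from the coefficients of a form in the basis `dx_I` to its coefficients in the basis
`dx_I / x_I` of logarithmic forms. -/
def logCoeffs [CommRing A] (x : Fin n → A) : GForm A n r →+ GForm A n r where
  toFun ω S := (∏ i ∈ S.1, x i) * ω S
  map_zero' := funext fun _ => mul_zero _
  map_add' _ _ := funext fun _ => mul_add _ _ _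

lemma logCoeffs_injective [Field A] {x : Fin n → A} (hx : ∀ i, x i ≠ 0) :
    Function.Injective (logCoeffs x : GForm A n r →+ GForm A n r) := fun _ _ h =>
  funext fun S => mul_left_cancel₀ (Finset.prod_ne_zero_iff.2 fun i _ => hx i) (congrFun h S)

lemma logCoeffs_surjective [Field A] {x : Fin n → A} (hx : ∀ i, x i ≠ 0) :
    Function.Surjective (logCoeffs x : GForm A n r →+ GForm A n r) := fun ω =>
  ⟨fun S => ω S / ∏ i ∈ S.1, x i,
    funext fun _ => mul_div_cancel₀ _ (Finset.prod_ne_zero_iff.2 fun i _ => hx i)⟩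

lemma derivation_prod_eq_zero {ι k A : Type*} [CommSemiring k] [CommSemiring A] [Algebra k A]
    (D : Derivation k A A) {s : Finset ι} {x : ι → A} (hx : ∀ i ∈ s, D (x i) = 0) :
    D (∏ i ∈ s, x i) = 0 := by
  refine Finset.prod_induction _ (D · = 0) (fun a b ha hb => ?_) D.map_one_eq_zero hx
  rw [D.leibniz, ha, hb, smul_zero, smul_zero, add_zero]

lemma koszulDifferential_logCoeffs [CommRing A] {x : Fin n → A} {δ : Fin n → Derivation ℤ A A}
    (hδx : ∀ i j, i ≠ j → δ j (x i) = 0) (ω : GForm A n r) :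
    koszulDifferential (logDerivation x δ) (logCoeffs x ω) =
      logCoeffs x (gextd (fun j => δ j) ω) := by
  ext T
  refine Eq.trans ?_ (Finset.mul_sum _ _ _).symm
  refine Finset.sum_congr rfl fun j _ => ?_
  have hconst : δ j.1 (∏ i ∈ T.1.erase j.1, x i) = 0 :=
    derivation_prod_eq_zero _ fun i hi => hδx i j.1 (Finset.ne_of_mem_erase hi)
  rw [← Finset.mul_prod_erase T.1 x j.2]
  change _ * (x j.1 * δ j.1 ((∏ i ∈ T.1.erase j.1, x i) * _)) = _ * (_ * δ j.1 _)
  rw [Derivation.leibniz, hconst, smul_zero, add_zero, smul_eq_mul]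
  ring

/-- The inverse Cartier operator `γ₀` on forms: `a_I dx_I ↦ φ(a_I) x_I ^ (p - 1) dx_I`. -/
def inverseCartier [CommRing A] (x : Fin n → A) (φ : A →+* A) (p : ℕ) (ω : GForm A n r) :
    GForm A n r :=
  fun T => φ (ω T) * ∏ i ∈ T.1, x i ^ (p - 1)

lemma logCoeffs_inverseCartier [CommRing A] {x : Fin n → A} {φ : A →+* A} {p : ℕ} (hp : 0 < p)
    (hφx : ∀ i, φ (x i) = x i ^ p) (ω : GForm A n r) :
    logCoeffs x (inverseCartier x φ p ω) = φ ∘ logCoeffs x ω := by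
  ext T
  have hprod : φ (∏ i ∈ T.1, x i) = (∏ i ∈ T.1, x i) * ∏ i ∈ T.1, x i ^ (p - 1) := by
    rw [map_prod, ← Finset.prod_mul_distrib]
    exact Finset.prod_congr rfl fun i _ => by rw [hφx, mul_pow_sub_one hp.ne']
  change _ * (_ * _) = φ (_ * _)
  rw [map_mul, hprod]
  ring

end LogCoeffs

section Polynomial

variable {σ K : Type*} (p : ℕ)

lemma pderiv_expand_char [CommSemiring K] [CharP K p] (g : MvPolynomial σ K) (j : σ) :
    pderiv j (expand p g) = 0 := by
  induction g using MvPolynomial.induction_on with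
  | C a => rw [expand_C, pderiv_C]
  | add f g hf hg => rw [map_add, map_add, hf, hg, add_zero]
  | mul_X f i hf =>
    rw [map_mul, expand_X, pderiv_mul, hf, derivation_pow_char, zero_mul, mul_zero, add_zero]

variable {p}

lemma dvd_of_pderiv_eq_zero [CommSemiring K] [NoZeroDivisors K] [CharP K p] {g : MvPolynomial σ K}
    {j : σ} (hg : pderiv j g = 0) {m : σ →₀ ℕ} (hm : m ∈ g.support) : p ∣ m j := by
  rcases Nat.eq_zero_or_pos (m j) with hmj | hmj
  · exact hmj ▸ dvd_zero p
  obtain ⟨m', rfl⟩ : ∃ m', m = m' + Finsupp.single j 1 :=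
    ⟨m - Finsupp.single j 1, (tsub_add_cancel_of_le (Finsupp.single_le_iff.2 hmj)).symm⟩
  have h := coeff_pderiv (i := j) g m'
  rw [hg, coeff_zero, eq_comm, mul_eq_zero] at h
  rw [← CharP.cast_eq_zero_iff K p]
  simpa using h.resolve_left (mem_support_iff.1 hm)

lemma exists_expand_eq_of_pderiv_eq_zero [CommSemiring K] [NoZeroDivisors K] [CharP K p]
    {g : MvPolynomial σ K} (hg : ∀ j, pderiv j g = 0) : ∃ h, expand p h = g := by
  refine ⟨∑ m ∈ g.support, monomial (m.mapRange (· / p) (Nat.zero_div p)) (coeff m g), ?_⟩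
  rw [map_sum]
  conv_rhs => rw [g.as_sum]
  refine Finset.sum_congr rfl fun m hm => ?_
  have hdiv : p • m.mapRange (· / p) (Nat.zero_div p) = m :=
    Finsupp.ext fun j => Nat.mul_div_cancel' (dvd_of_pderiv_eq_zero (hg j) hm)
  rw [expand_monomial, hdiv]

end Polynomial

section RationalFunctions

lemma exists_eq_pow_mul_algebraMap (A : Type*) {F : Type*} [CommRing A] [IsDomain A] [Field F]
    [Algebra A F] [IsFractionRing A F] {p : ℕ} (hp : p ≠ 0) (f : F) :
    ∃ (c : F) (a : A), f = c ^ p * algebraMap A F a := by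
  obtain ⟨a, b, hb, rfl⟩ := IsFractionRing.div_surjective (A := A) f
  have hb0 : algebraMap A F b ≠ 0 := IsFractionRing.to_map_ne_zero_of_mem_nonZeroDivisors hb
  refine ⟨(algebraMap A F b)⁻¹, b ^ (p - 1) * a, ?_⟩
  rw [map_mul, map_pow, ← mul_assoc, inv_pow, ← pow_sub_one_mul hp, mul_inv_rev, mul_assoc _⁻¹,
    inv_mul_cancel₀ (pow_ne_zero _ hb0), mul_one, div_eq_inv_mul]

variable {σ K F : Type*} [CommRing K] [Field F] [Algebra (MvPolynomial σ K) F]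

variable (K F) in
/-- The coordinates `z_i` of the field `F = K(z)`. -/
noncomputable def coordinate (i : σ) : F :=
  algebraMap (MvPolynomial σ K) F (X i)

variable (K) in
/-- The derivations `δ j` of `F` extend the partial derivatives of `K[z]`. -/
def ExtendsPDeriv (δ : σ → Derivation ℤ F F) : Prop :=
  ∀ (j : σ) (g : MvPolynomial σ K),
    δ j (algebraMap (MvPolynomial σ K) F g) = algebraMap (MvPolynomial σ K) F (pderiv j g)

variable (σ K) in
/-- The endomorphism `φ` of `F` extends the substitution `a(z) ↦ a(z^p)` of `K[z]`. -/
def ExtendsExpand (p : ℕ) (φ : F →+* F) : Prop :=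
  ∀ g : MvPolynomial σ K,
    φ (algebraMap (MvPolynomial σ K) F g) = algebraMap (MvPolynomial σ K) F (expand p g)

variable {δ : σ → Derivation ℤ F F} {φ : F →+* F} {p : ℕ}

lemma ExtendsPDeriv.apply_coordinate_of_ne (hδ : ExtendsPDeriv K δ) {i j : σ} (hij : i ≠ j) :
    δ j (coordinate K F i) = 0 := by
  rw [coordinate, hδ, pderiv_X_of_ne hij, map_zero]

lemma ExtendsExpand.map_coordinate (hφ : ExtendsExpand σ K p φ) (i : σ) :
    φ (coordinate K F i) = coordinate K F i ^ p := by
  rw [coordinate, hφ, expand_X, map_pow]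

lemma logDerivation_pow_monomial (hδ : ExtendsPDeriv K δ) (j : σ) (m : σ →₀ ℕ) (a : K) (k : ℕ) :
    (logDerivation (coordinate K F) δ j ^ k) (algebraMap (MvPolynomial σ K) F (monomial m a)) =
      m j ^ k • algebraMap (MvPolynomial σ K) F (monomial m a) := by
  induction k with
  | zero => rw [pow_zero, pow_zero, one_smul, AddMonoid.End.coe_one, id_eq]
  | succ k ih =>
    rw [pow_succ', AddMonoid.End.coe_mul, Function.comp_apply, ih, map_nsmul, logDerivation_apply,
      hδ, coordinate, ← map_mul, X_mul_pderiv_monomial, map_nsmul, smul_smul, pow_succ]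

variable [IsFractionRing (MvPolynomial σ K) F]

lemma pow_char_mem_fieldRange_substitution [Fact p.Prime] [CharP K p]
    (hφ : ExtendsExpand σ K p φ) (f : F) :
    f ^ p ∈ φ.fieldRange := by
  obtain ⟨a, b, -, rfl⟩ := IsFractionRing.div_surjective (A := MvPolynomial σ K) f
  have hpoly (g : MvPolynomial σ K) : algebraMap _ F g ^ p ∈ φ.fieldRange :=
    ⟨algebraMap _ F (g.map (frobenius K p)), by
      rw [hφ, ← map_expand, map_frobenius_expand, map_pow]⟩
  rw [div_pow]
  exact div_mem (hpoly a) (hpoly b)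

lemma coordinate_ne_zero [Nontrivial K] (i : σ) : coordinate K F i ≠ 0 :=
  (FaithfulSMul.algebraMap_injective (MvPolynomial σ K) F).ne_iff' (map_zero _) |>.2 (X_ne_zero i)

variable [IsDomain K]

lemma addMonoidEnd_ext_of_commute_mulLeft_pow (hp : p ≠ 0) {A B : AddMonoid.End F}
    (hA : ∀ c : F, Commute A (AddMonoid.End.mulLeft (c ^ p)))
    (hB : ∀ c : F, Commute B (AddMonoid.End.mulLeft (c ^ p)))
    (h : ∀ (m : σ →₀ ℕ) (a : K), A (algebraMap (MvPolynomial σ K) F (monomial m a)) =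
      B (algebraMap (MvPolynomial σ K) F (monomial m a))) : A = B := by
  have hpoly (g : MvPolynomial σ K) : A (algebraMap _ F g) = B (algebraMap _ F g) := by
    rw [g.as_sum, map_sum, map_sum, map_sum]
    exact Finset.sum_congr rfl fun m _ => h m _
  refine DFunLike.ext _ _ fun f => ?_
  obtain ⟨c, g, rfl⟩ := exists_eq_pow_mul_algebraMap (MvPolynomial σ K) hp f
  calc A (c ^ p * algebraMap _ F g)
      = c ^ p * A (algebraMap _ F g) := DFunLike.congr_fun (hA c) _
    _ = c ^ p * B (algebraMap _ F g) := by rw [hpoly]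
    _ = B (c ^ p * algebraMap _ F g) := (DFunLike.congr_fun (hB c) _).symm

lemma commute_logDerivation (p : ℕ) [Fact p.Prime] [CharP K p] (hδ : ExtendsPDeriv K δ)
    (i j : σ) :
    Commute (logDerivation (coordinate K F) δ i) (logDerivation (coordinate K F) δ j) := by
  have : CharP F p := IsFractionRing.charP_of_isFractionRing (MvPolynomial σ K) p
  have hlin (i) := commute_logDerivation_mulLeft_pow_char (coordinate K F) δ p i
  refine addMonoidEnd_ext_of_commute_mulLeft_pow (σ := σ) (K := K) (Fact.out : p.Prime).ne_zero
    (fun c => (hlin i c).mul_left (hlin j c)) (fun c => (hlin j c).mul_left (hlin i c))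
    fun m a => ?_
  have heigen (i : σ) := logDerivation_pow_monomial hδ i m a 1
  simp only [pow_one] at heigen
  simp only [AddMonoid.End.coe_mul, Function.comp_apply, heigen, map_nsmul]
  rw [smul_comm]

variable [Fact p.Prime] [CharP K p]

lemma logDerivation_pow_char (hδ : ExtendsPDeriv K δ) (j : σ) :
    logDerivation (coordinate K F) δ j ^ p = logDerivation (coordinate K F) δ j := by
  have : CharP F p := IsFractionRing.charP_of_isFractionRing (MvPolynomial σ K) p
  have hlin := commute_logDerivation_mulLeft_pow_char (coordinate K F) δ p j
  refine addMonoidEnd_ext_of_commute_mulLeft_pow (σ := σ) (K := K) (Fact.out : p.Prime).ne_zero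
    (fun c => (hlin c).pow_left p) hlin fun m a => ?_
  have heigen := logDerivation_pow_monomial hδ j m a 1
  rw [pow_one, pow_one] at heigen
  rw [logDerivation_pow_monomial hδ, heigen, ← Nat.cast_smul_eq_nsmul F,
    ← Nat.cast_smul_eq_nsmul F (m j), Nat.cast_pow, ← frobenius_def, map_natCast]

lemma derivation_substitution_eq_zero (hδ : ExtendsPDeriv K δ) (hφ : ExtendsExpand σ K p φ) (j : σ)
    (f : F) : δ j (φ f) = 0 := by
  have : CharP F p := IsFractionRing.charP_of_isFractionRing (MvPolynomial σ K) p
  obtain ⟨c, g, rfl⟩ :=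
    exists_eq_pow_mul_algebraMap (MvPolynomial σ K) (Fact.out : p.Prime).ne_zero f
  rw [map_mul, map_pow, Derivation.leibniz, derivation_pow_char, hφ, hδ, pderiv_expand_char,
    map_zero, smul_zero, smul_zero, add_zero]

lemma logDerivation_substitution_eq_zero (hδ : ExtendsPDeriv K δ) (hφ : ExtendsExpand σ K p φ)
    (j : σ) (f : F) : logDerivation (coordinate K F) δ j (φ f) = 0 := by
  rw [logDerivation_apply, derivation_substitution_eq_zero hδ hφ, mul_zero]

lemma mem_fieldRange_substitution_of_logDerivation_eq_zero (hδ : ExtendsPDeriv K δ)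
    (hφ : ExtendsExpand σ K p φ) {f : F} (hf : ∀ j, logDerivation (coordinate K F) δ j f = 0) :
    f ∈ φ.fieldRange := by
  have : CharP F p := IsFractionRing.charP_of_isFractionRing (MvPolynomial σ K) p
  obtain ⟨c, g, rfl⟩ :=
    exists_eq_pow_mul_algebraMap (MvPolynomial σ K) (Fact.out : p.Prime).ne_zero f
  rcases eq_or_ne c 0 with rfl | hc
  · rw [zero_pow (Fact.out : p.Prime).ne_zero, zero_mul]
    exact zero_mem _
  have hg : ∀ j, pderiv j g = 0 := fun j => by
    have h := hf j
    rw [logDerivation_apply, Derivation.leibniz, derivation_pow_char, hδ, smul_zero, add_zero,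
      smul_eq_mul, mul_eq_zero, mul_eq_zero] at h
    refine (FaithfulSMul.algebraMap_injective (MvPolynomial σ K) F) ?_
    rw [map_zero]
    exact (h.resolve_left (coordinate_ne_zero j)).resolve_left (pow_ne_zero p hc)
  obtain ⟨h, rfl⟩ := exists_expand_eq_of_pderiv_eq_zero hg
  exact mul_mem (pow_char_mem_fieldRange_substitution hφ c) ⟨algebraMap _ F h, hφ h⟩

end RationalFunctions

section InverseCartier

variable {K : Type*} {F : Type} [CommRing K] [IsDomain K] [Field F] {n r p : ℕ}
  [Algebra (MvPolynomial (Fin n) K) F] [IsFractionRing (MvPolynomial (Fin n) K) F]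
  [Fact p.Prime] [CharP K p] {δ : Fin n → Derivation ℤ F F} {φ : F →+* F}

lemma gextd_inverseCartier (hδ : ExtendsPDeriv K δ) (hφ : ExtendsExpand (Fin n) K p φ)
    (ω : GForm F n r) : gextd (fun j => δ j) (inverseCartier (coordinate K F) φ p ω) = 0 := by
  refine logCoeffs_injective (x := coordinate K F) coordinate_ne_zero ?_
  rw [← koszulDifferential_logCoeffs fun i j => hδ.apply_coordinate_of_ne,
    logCoeffs_inverseCartier (Fact.out : p.Prime).pos hφ.map_coordinate, map_zero]
  exact koszulDifferential_eq_zero_of_forall _ fun j _ =>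
    logDerivation_substitution_eq_zero hδ hφ j _

variable (p) in
lemma logDerivation_pow_sub_two_add_two (hδ : ExtendsPDeriv K δ) (j : Fin n) :
    logDerivation (coordinate K F) δ j ^ (p - 2 + 2) = logDerivation (coordinate K F) δ j := by
  rw [Nat.sub_add_cancel (Fact.out : p.Prime).two_le, logDerivation_pow_char hδ]

lemma exists_inverseCartier_eq_add_gextd (hδ : ExtendsPDeriv K δ)
    (hφ : ExtendsExpand (Fin n) K p φ) {ζ : GForm F n (r + 1)}
    (hζ : gextd (fun j => δ j) ζ = 0) :
    ∃ (ω : GForm F n (r + 1)) (η : GForm F n r),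
      inverseCartier (coordinate K F) φ p ω = ζ + gextd (fun j => δ j) η := by
  have hx : ∀ i : Fin n, coordinate K F i ≠ 0 := coordinate_ne_zero
  have hδx (i j : Fin n) (hij : i ≠ j) := hδ.apply_coordinate_of_ne hij
  have hclosed : koszulDifferential (logDerivation (coordinate K F) δ)
      (logCoeffs (coordinate K F) ζ) = 0 := by
    rw [koszulDifferential_logCoeffs hδx, hζ, map_zero]
  obtain ⟨v, hv, η', hη'⟩ := exists_horizontal_sub_mem_range (commute_logDerivation p hδ)
    (logDerivation_pow_sub_two_add_two p hδ) hclosed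
  choose c hc using fun T =>
    mem_fieldRange_substitution_of_logDerivation_eq_zero hδ hφ (hv · T)
  obtain ⟨ω, rfl⟩ := logCoeffs_surjective hx c
  obtain ⟨η, rfl⟩ := logCoeffs_surjective hx η'
  refine ⟨ω, η, logCoeffs_injective hx ?_⟩
  calc logCoeffs (coordinate K F) (inverseCartier (coordinate K F) φ p ω)
      = φ ∘ logCoeffs (coordinate K F) ω :=
        logCoeffs_inverseCartier (Fact.out : p.Prime).pos hφ.map_coordinate ω
    _ = v := funext hc
    _ = logCoeffs (coordinate K F) (ζ + gextd (fun j => δ j) η) := by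
        rw [map_add, ← koszulDifferential_logCoeffs hδx, hη', add_sub_cancel]

lemma eq_zero_of_inverseCartier_eq_gextd (hδ : ExtendsPDeriv K δ)
    (hφ : ExtendsExpand (Fin n) K p φ) {ω : GForm F n (r + 1)} {η : GForm F n r}
    (hη : inverseCartier (coordinate K F) φ p ω = gextd (fun j => δ j) η) : ω = 0 := by
  have hlog : koszulDifferential (logDerivation (coordinate K F) δ)
      (logCoeffs (coordinate K F) η) = φ ∘ logCoeffs (coordinate K F) ω := by
    rw [koszulDifferential_logCoeffs fun i j => hδ.apply_coordinate_of_ne, ← hη,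
      logCoeffs_inverseCartier (Fact.out : p.Prime).pos hφ.map_coordinate]
  have hzero : φ ∘ logCoeffs (coordinate K F) ω = 0 :=
    eq_zero_of_horizontal_of_mem_range (commute_logDerivation p hδ)
      (logDerivation_pow_sub_two_add_two p hδ)
      (fun j _ => logDerivation_substitution_eq_zero hδ hφ j _) ⟨_, hlog⟩
  refine logCoeffs_injective (x := coordinate K F) coordinate_ne_zero (funext fun T => ?_)
  rw [map_zero]
  exact (map_eq_zero φ).1 (congrFun hzero T)

end InverseCartier

theorem gamma_zero_cohomology_iso_general
    (K : Type*) [CommRing K] [IsDomain K] {F : Type} [Field F]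
    (p n r : ℕ) [Algebra (MvPolynomial (Fin n) K) F] [IsFractionRing (MvPolynomial (Fin n) K) F]
    [CharP K p] (hp : 0 < p) (D : Fin n → F → F)
    (hDadd : ∀ j a b, D j (a + b) = D j a + D j b)
    (hDmul : ∀ j a b, D j (a * b) = a * D j b + b * D j a)
    (hDalg : ∀ (j : Fin n) (g : MvPolynomial (Fin n) K),
      D j (algebraMap (MvPolynomial (Fin n) K) F g) =
        algebraMap (MvPolynomial (Fin n) K) F (pderiv j g))
    (φ : F →+* F)
    (hφ : ∀ g : MvPolynomial (Fin n) K,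
      φ (algebraMap (MvPolynomial (Fin n) K) F g) =
        algebraMap (MvPolynomial (Fin n) K) F (aeval (fun i : Fin n => X i ^ p) g))
    (γ : GForm F n (r + 1) → GForm F n (r + 1))
    (hγ : ∀ ω T, γ ω T = φ (ω T) *
      ∏ i ∈ T.1, algebraMap (MvPolynomial (Fin n) K) F (X i) ^ (p - 1)) :
    (∀ ω, gextd D (γ ω) = 0) ∧
      (∀ ζ : GForm F n (r + 1), gextd D ζ = 0 →
        ∃ (ω : GForm F n (r + 1)) (η : GForm F n r), ∀ T, γ ω T = ζ T + gextd D η T) ∧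
      (∀ ω : GForm F n (r + 1), (∃ η : GForm F n r, γ ω = gextd D η) → ∀ T, ω T = 0) := by
  have : Fact p.Prime := ⟨(CharP.char_is_prime_or_zero K p).resolve_right hp.ne'⟩
  obtain ⟨δ, rfl⟩ : ∃ δ : Fin n → Derivation ℤ F F, D = fun j => ⇑(δ j) :=
    ⟨fun j => Derivation.mk' (AddMonoidHom.mk' (D j) (hDadd j)).toIntLinearMap (hDmul j), rfl⟩
  have hδ : ExtendsPDeriv K δ := hDalg
  have hexpand : ExtendsExpand (Fin n) K p φ := hφ
  obtain rfl : γ = inverseCartier (coordinate K F) φ p := funext₂ hγ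
  refine ⟨gextd_inverseCartier hδ hexpand, fun ζ hζ => ?_, fun ω ⟨_, hη⟩ =>
    congrFun (eq_zero_of_inverseCartier_eq_gextd hδ hexpand hη)⟩
  obtain ⟨ω, η, h⟩ := exists_inverseCartier_eq_add_gextd hδ hexpand hζ
  exact ⟨ω, η, congrFun h⟩

/-- Over a field `K` of characteristic `p > 0`, the map
`γ₀ : Ω^r_{K(z)/K} → H^r = Z^r/B^r`, `a_I(z) dz_I ↦ [a_I(z^p)·z_I^{p-1} dz_I]`, is a bijection
(for positive degrees `r = r₀+1`). Here `φ₀` is the substitution `a(z) ↦ a(z^p)` on `K(z)`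
(any ring endomorphism extending `z_i ↦ z_i^p` on polynomials) and `D` is the family of partial
derivatives (any family of derivations extending the formal `∂_j` of `K[z]`).
Bijectivity of the induced map on cohomology is expressed by: `γ₀` lands in closed forms, every
closed form is cohomologous to some `γ₀ ω`, and `γ₀ ω` exact implies `ω = 0`. -/
theorem gamma_zero_cohomology_iso
    (K : Type) [Field K] (p n r : ℕ) [CharP K p] (hp : 0 < p)
    (D : Fin n → FractionRing (MvPolynomial (Fin n) K) → FractionRing (MvPolynomial (Fin n) K))
    (hDadd : ∀ j a b, D j (a + b) = D j a + D j b)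
    (hDmul : ∀ j a b, D j (a * b) = a * D j b + b * D j a)
    (hDalg : ∀ (j : Fin n) (g : MvPolynomial (Fin n) K),
      D j (algebraMap (MvPolynomial (Fin n) K) (FractionRing (MvPolynomial (Fin n) K)) g) =
        algebraMap (MvPolynomial (Fin n) K) (FractionRing (MvPolynomial (Fin n) K)) (pderiv j g))
    (φ : FractionRing (MvPolynomial (Fin n) K) →+* FractionRing (MvPolynomial (Fin n) K))
    (hφ : ∀ g : MvPolynomial (Fin n) K,
      φ (algebraMap (MvPolynomial (Fin n) K) (FractionRing (MvPolynomial (Fin n) K)) g) =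
        algebraMap (MvPolynomial (Fin n) K) (FractionRing (MvPolynomial (Fin n) K))
          (aeval (fun i : Fin n => X i ^ p) g))
    (γ : GForm (FractionRing (MvPolynomial (Fin n) K)) n (r + 1) →
      GForm (FractionRing (MvPolynomial (Fin n) K)) n (r + 1))
    (hγ : ∀ ω T, γ ω T = φ (ω T) *
      ∏ i ∈ T.1, algebraMap (MvPolynomial (Fin n) K) (FractionRing (MvPolynomial (Fin n) K))
        (X i) ^ (p - 1)) :
    (∀ ω, gextd D (γ ω) = 0) ∧
      (∀ ζ : GForm (FractionRing (MvPolynomial (Fin n) K)) n (r + 1), gextd D ζ = 0 →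
        ∃ (ω : GForm (FractionRing (MvPolynomial (Fin n) K)) n (r + 1))
          (η : GForm (FractionRing (MvPolynomial (Fin n) K)) n r),
          ∀ T, γ ω T = ζ T + gextd D η T) ∧
      (∀ ω : GForm (FractionRing (MvPolynomial (Fin n) K)) n (r + 1),
        (∃ η : GForm (FractionRing (MvPolynomial (Fin n) K)) n r, γ ω = gextd D η) →
          ∀ T, ω T = 0) :=
  gamma_zero_cohomology_iso_general K p n r hp D hDadd hDmul hDalg φ hφ γ hγ
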